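/- arXiv:2307.02964 — 2 statements merged into one kernel-verified Lean document; each statement's English description precedes it below -/
import Mathlib

section
/- There exists a constant C > 0, depending only on m, such that for every m×m complex matrix M one has ‖M‖² − Σ_i |λ_i|² ≤ C·‖[M,M*]‖, where (λ_i) is the multiset of roots of the characteristic polynomial of M counted with multiplicity. -/
open Matrix

/-- The Frobenius norm of a complex square matrix. -/
noncomputable def frobNorm {m : ℕ} (A : Matrix (Fin m) (Fin m) ℂ) : ℝ :=
  Real.sqrt (∑ i, ∑ j, ‖A i j‖ ^ 2)

/-!
By Schur, `M` is the matrix in the standard basis of an operator whose matrix `T` in another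
orthonormal basis is upper triangular; the spectrum, the Frobenius norm and the norm of the
commutator are the same for `M` and `T`, and `‖T‖² - ∑ |λᵢ|²` is the sum of `|Tᵢⱼ|²` over `i < j`.
For real weights `d` one has `∑ dᵢ [T, T*]ᵢᵢ = ∑ (dᵢ - dⱼ) |Tᵢⱼ|²`. If `dᵢ - dⱼ ≥ 1` for `i < j`,
the right side bounds the strictly upper part of `T` from above, while by Cauchy–Schwarz the left
side is at most `√(∑ dᵢ²) ‖[T, T*]‖`. The centred weights `dᵢ = (m - 1) / 2 - i` minimise `∑ dᵢ²`
and give Henrici's constant `√((m³ - m) / 12)`.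
-/

open Module Submodule
open scoped Matrix.Norms.Frobenius InnerProductSpace

section FrobeniusNorm

variable {m n α 𝕜 : Type*} [RCLike 𝕜]

lemma mul_conjTranspose_apply_self [Fintype n] (A : Matrix m n 𝕜) (i : m) :
    (A * Aᴴ) i i = ((∑ j, ‖A i j‖ ^ 2 : ℝ) : 𝕜) := by
  simp [mul_apply, RCLike.mul_conj]

lemma conjTranspose_mul_apply_self [Fintype m] (A : Matrix m n 𝕜) (j : n) :
    (Aᴴ * A) j j = ((∑ i, ‖A i j‖ ^ 2 : ℝ) : 𝕜) := by
  simp [mul_apply, RCLike.conj_mul]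

variable [Fintype m] [Fintype n]

lemma sq_frobenius_norm [SeminormedAddCommGroup α] (A : Matrix m n α) :
    ‖A‖ ^ 2 = ∑ i, ∑ j, ‖A i j‖ ^ 2 := by
  simp only [frobenius_norm_def, Real.rpow_ofNat, ← Real.sqrt_eq_rpow]
  exact Real.sq_sqrt (by positivity)

lemma trace_mul_conjTranspose (A : Matrix m n 𝕜) : (A * Aᴴ).trace = ((‖A‖ ^ 2 : ℝ) : 𝕜) := by
  simp only [trace, diag_apply, mul_conjTranspose_apply_self, sq_frobenius_norm,
    RCLike.ofReal_sum]

lemma sum_sq_norm_diag_le (A : Matrix n n 𝕜) : ∑ i, ‖A i i‖ ^ 2 ≤ ‖A‖ ^ 2 := by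
  rw [sq_frobenius_norm]
  gcongr with i
  exact Finset.single_le_sum (f := fun j ↦ ‖A i j‖ ^ 2) (fun _ _ ↦ by positivity)
    (Finset.mem_univ i)

lemma sum_mul_re_diag_le (d : n → ℝ) (A : Matrix n n 𝕜) :
    ∑ i, d i * RCLike.re (A i i) ≤ √(∑ i, d i ^ 2) * ‖A‖ := by
  calc ∑ i, d i * RCLike.re (A i i)
      ≤ √(∑ i, d i ^ 2) * √(∑ i, RCLike.re (A i i) ^ 2) := Real.sum_mul_le_sqrt_mul_sqrt _ _ _
    _ ≤ √(∑ i, d i ^ 2) * √(∑ i, ‖A i i‖ ^ 2) := by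
      gcongr √_ * √(∑ i, ?_) with i
      exact sq_le_sq.2 ((RCLike.abs_re_le_norm _).trans (le_abs_self _))
    _ ≤ √(∑ i, d i ^ 2) * ‖A‖ := by
      gcongr
      exact Real.sqrt_le_iff.2 ⟨norm_nonneg A, sum_sq_norm_diag_le A⟩

end FrobeniusNorm

section ToMatrixOrthonormal

variable {m n 𝕜 E : Type*} [Fintype m] [Fintype n] [DecidableEq m] [DecidableEq n] [RCLike 𝕜]
  [NormedAddCommGroup E] [InnerProductSpace 𝕜 E] [FiniteDimensional 𝕜 E]

lemma sq_norm_toMatrixOrthonormal (b : OrthonormalBasis n 𝕜 E) (T : E →ₗ[𝕜] E) :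
    ((‖T.toMatrixOrthonormal b‖ ^ 2 : ℝ) : 𝕜) = LinearMap.trace 𝕜 E (T * star T) := by
  have htrace : LinearMap.trace 𝕜 E (T * star T) = ((T * star T).toMatrixOrthonormal b).trace :=
    LinearMap.trace_eq_matrix_trace 𝕜 b.toBasis _
  rw [htrace, map_mul, map_star, star_eq_conjTranspose, trace_mul_conjTranspose]

lemma norm_toMatrixOrthonormal_eq (b : OrthonormalBasis m 𝕜 E) (c : OrthonormalBasis n 𝕜 E)
    (T : E →ₗ[𝕜] E) : ‖T.toMatrixOrthonormal b‖ = ‖T.toMatrixOrthonormal c‖ := by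
  refine (sq_eq_sq₀ (norm_nonneg _) (norm_nonneg _)).1 (RCLike.ofReal_injective (K := 𝕜) ?_)
  rw [sq_norm_toMatrixOrthonormal, sq_norm_toMatrixOrthonormal]

lemma charpoly_toMatrixOrthonormal (b : OrthonormalBasis n 𝕜 E) (T : E →ₗ[𝕜] E) :
    (T.toMatrixOrthonormal b).charpoly = T.charpoly :=
  T.charpoly_toMatrix b.toBasis

lemma commutator_toMatrixOrthonormal (b : OrthonormalBasis n 𝕜 E) (T : E →ₗ[𝕜] E) :
    T.toMatrixOrthonormal b * (T.toMatrixOrthonormal b)ᴴ -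
        (T.toMatrixOrthonormal b)ᴴ * T.toMatrixOrthonormal b =
      (T * star T - star T * T).toMatrixOrthonormal b := by
  simp only [map_sub, map_mul, map_star, star_eq_conjTranspose]

end ToMatrixOrthonormal

section SchurTriangulation

lemma orthonormal_fin_cons {𝕜 E : Type*} [RCLike 𝕜] [SeminormedAddCommGroup E]
    [InnerProductSpace 𝕜 E] {n : ℕ} {v : E} {w : Fin n → E} (hv : ‖v‖ = 1)
    (hw : Orthonormal 𝕜 w) (hvw : ∀ i, ⟪v, w i⟫_𝕜 = 0) :
    Orthonormal 𝕜 (Fin.cons v w : Fin (n + 1) → E) := by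
  refine ⟨Fin.cases hv hw.1, fun i j hij ↦ ?_⟩
  cases i using Fin.cases <;> cases j using Fin.cases
  · exact absurd rfl hij
  · exact hvw _
  · exact inner_eq_zero_symm.1 (hvw _)
  · exact hw.2 fun h ↦ hij (congrArg Fin.succ h)

variable {E : Type*} [NormedAddCommGroup E] [InnerProductSpace ℂ E] [FiniteDimensional ℂ E]

lemma exists_norm_eq_one_and_apply_eq_smul [Nontrivial E] (T : E →ₗ[ℂ] E) :
    ∃ (v : E) (μ : ℂ), ‖v‖ = 1 ∧ T v = μ • v := by
  obtain ⟨μ, hμ⟩ := End.exists_eigenvalue T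
  obtain ⟨v, hv⟩ := hμ.exists_hasEigenvector
  refine ⟨(‖v‖⁻¹ : ℂ) • v, μ, norm_smul_inv_norm hv.2, ?_⟩
  rw [map_smul, hv.apply_eq_smul, smul_comm]

theorem exists_orthonormalBasis_isUpperTriangular {n : ℕ} (hn : finrank ℂ E = n)
    (T : E →ₗ[ℂ] E) :
    ∃ b : OrthonormalBasis (Fin n) ℂ E, (T.toMatrixOrthonormal b).IsUpperTriangular := by
  induction n generalizing E with
  | zero => exact ⟨(stdOrthonormalBasis ℂ E).reindex (finCongr hn), fun i ↦ i.elim0⟩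
  | succ n ih =>
    have : Nontrivial E := nontrivial_of_finrank_eq_succ hn
    obtain ⟨v, μ, hv, hTv⟩ := exists_norm_eq_one_and_apply_eq_smul T
    have : Fact (finrank ℂ E = n + 1) := ⟨hn⟩
    let K : Submodule ℂ E := (ℂ ∙ v)ᗮ
    let compression : K →ₗ[ℂ] K := K.orthogonalProjectionOnto.toLinearMap ∘ₗ T ∘ₗ K.subtype
    have hK : finrank ℂ K = n :=
      finrank_orthogonal_span_singleton (norm_ne_zero_iff.1 (hv ▸ one_ne_zero))
    obtain ⟨c, hc⟩ := ih hK compression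
    have hvc (i : Fin n) : ⟪v, c i⟫_ℂ = 0 := mem_orthogonal_singleton_iff_inner_right.1 (c i).2
    have horth : Orthonormal ℂ (Fin.cons v (fun i ↦ c i) : Fin (n + 1) → E) :=
      orthonormal_fin_cons hv (c.orthonormal.comp_linearIsometry K.subtypeₗᵢ) hvc
    let b := (basisOfOrthonormalOfCardEqFinrank horth (by simp [hn])).toOrthonormalBasis
      (by simpa using horth)
    have hb0 : b 0 = v := by simp [b]
    have hbsucc (i : Fin n) : b i.succ = c i := by simp [b]
    refine ⟨b, fun i j hji ↦ ?_⟩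
    obtain ⟨i, rfl⟩ := Fin.exists_succ_eq.2 (Fin.ne_zero_of_lt hji)
    rw [LinearMap.toMatrixOrthonormal_apply_apply, hbsucc]
    cases j using Fin.cases with
    | zero => rw [hb0, hTv, inner_smul_right, inner_eq_zero_symm.1 (hvc i), mul_zero]
    | succ j =>
      have hcij := hc (Fin.succ_lt_succ_iff.1 hji)
      rw [LinearMap.toMatrixOrthonormal_apply_apply] at hcij
      simpa [compression, hbsucc] using hcij

end SchurTriangulation

section Henrici

variable {n 𝕜 : Type*} [Fintype n] [RCLike 𝕜]

lemma sum_mul_re_commutator_diag (d : n → ℝ) (A : Matrix n n 𝕜) :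
    ∑ i, d i * RCLike.re ((A * Aᴴ - Aᴴ * A) i i) = ∑ i, ∑ j, (d i - d j) * ‖A i j‖ ^ 2 := by
  simp only [Matrix.sub_apply, mul_conjTranspose_apply_self, conjTranspose_mul_apply_self, map_sub,
    RCLike.ofReal_re, mul_sub, sub_mul, Finset.sum_sub_distrib, Finset.mul_sum]
  congr 1
  exact Finset.sum_comm

lemma sq_norm_sub_sum_sq_diag_le_of_isUpperTriangular [LinearOrder n] {A : Matrix n n 𝕜}
    (hA : A.IsUpperTriangular) {d : n → ℝ} (hd : ∀ i j, i < j → 1 ≤ d i - d j) :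
    ‖A‖ ^ 2 - ∑ i, ‖A i i‖ ^ 2 ≤ √(∑ i, d i ^ 2) * ‖A * Aᴴ - Aᴴ * A‖ := by
  have entry_le (i j : n) :
      ‖A i j‖ ^ 2 - (if i = j then ‖A i i‖ ^ 2 else 0) ≤ (d i - d j) * ‖A i j‖ ^ 2 := by
    rcases lt_trichotomy i j with hij | rfl | hji
    · simpa [hij.ne] using le_mul_of_one_le_left (sq_nonneg ‖A i j‖) (hd i j hij)
    · simp
    · simp [hji.ne', hA hji]
  calc ‖A‖ ^ 2 - ∑ i, ‖A i i‖ ^ 2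
      = ∑ i, ∑ j, (‖A i j‖ ^ 2 - if i = j then ‖A i i‖ ^ 2 else 0) := by
        simp [sq_frobenius_norm]
    _ ≤ ∑ i, ∑ j, (d i - d j) * ‖A i j‖ ^ 2 := by gcongr; exact entry_le _ _
    _ = ∑ i, d i * RCLike.re ((A * Aᴴ - Aᴴ * A) i i) := (sum_mul_re_commutator_diag d A).symm
    _ ≤ √(∑ i, d i ^ 2) * ‖A * Aᴴ - Aᴴ * A‖ := sum_mul_re_diag_le _ _

lemma roots_charpoly_of_isUpperTriangular {R : Type*} [CommRing R] [IsDomain R] [LinearOrder n]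
    {A : Matrix n n R} (hA : A.IsUpperTriangular) :
    A.charpoly.roots = Finset.univ.val.map fun i ↦ A i i := by
  rw [charpoly_of_isUpperTriangular A hA,
    ← Polynomial.roots_multiset_prod_X_sub_C (Finset.univ.val.map _), Multiset.map_map]
  rfl

lemma sum_sq_half_sub (N : ℕ) :
    ∑ i : Fin N, (((N : ℝ) - 1) / 2 - i) ^ 2 = ((N : ℝ) ^ 3 - N) / 12 := by
  have sum_sq_sub (c : ℝ) : ∑ i ∈ Finset.range N, (c - i) ^ 2 =
      N * c ^ 2 - N * (N - 1) * c + N * (N - 1) * (2 * N - 1) / 6 := by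
    induction N with
    | zero => simp
    | succ N ih => rw [Finset.sum_range_succ, ih]; push_cast; ring
  rw [Fin.sum_univ_eq_sum_range (fun i ↦ (((N : ℝ) - 1) / 2 - i) ^ 2), sum_sq_sub]
  ring

theorem sq_frobNorm_sub_sum_sq_eigenvalues_le_general [DecidableEq n] (M : Matrix n n ℂ) :
    ‖M‖ ^ 2 - (M.charpoly.roots.map fun z ↦ ‖z‖ ^ 2).sum ≤
      √(((Fintype.card n : ℝ) ^ 3 - Fintype.card n) / 12) * ‖M * Mᴴ - Mᴴ * M‖ := by
  let std := EuclideanSpace.basisFun n ℂ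
  obtain ⟨T, rfl⟩ : ∃ T, LinearMap.toMatrixOrthonormal std T = M := EquivLike.surjective _ M
  obtain ⟨b, hb⟩ := exists_orthonormalBasis_isUpperTriangular finrank_euclideanSpace T
  have hroots : (T.toMatrixOrthonormal std).charpoly.roots =
      Finset.univ.val.map fun i ↦ T.toMatrixOrthonormal b i i := by
    rw [charpoly_toMatrixOrthonormal, ← charpoly_toMatrixOrthonormal b,
      roots_charpoly_of_isUpperTriangular hb]
  rw [hroots, Multiset.map_map, commutator_toMatrixOrthonormal, norm_toMatrixOrthonormal_eq std b,
    norm_toMatrixOrthonormal_eq std b, ← commutator_toMatrixOrthonormal, ← sum_sq_half_sub]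
  refine sq_norm_sub_sum_sq_diag_le_of_isUpperTriangular hb fun i j hij ↦ ?_
  have add_one_le : (i : ℝ) + 1 ≤ j := mod_cast hij
  linarith

end Henrici

lemma frobNorm_eq_norm {m : ℕ} (A : Matrix (Fin m) (Fin m) ℂ) : frobNorm A = ‖A‖ := by
  rw [frobNorm, ← sq_frobenius_norm, Real.sqrt_sq (norm_nonneg A)]

/-- There exists a constant `C > 0`, depending only on `m`, such that for
every `m × m` complex matrix `M`,
`‖M‖² − ∑_i |λ_i|² ≤ C ‖[M,M*]‖`, where `(λ_i)` is the multiset of roots of the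
characteristic polynomial of `M` counted with multiplicity. -/
theorem sq_frobNorm_sub_sum_sq_eigenvalues_le (m : ℕ) :
    ∃ C : ℝ, 0 < C ∧ ∀ M : Matrix (Fin m) (Fin m) ℂ,
      frobNorm M ^ 2 - (((Matrix.charpoly M).roots.map fun z => ‖z‖ ^ 2)).sum ≤
        C * frobNorm (M * Mᴴ - Mᴴ * M) := by
  -- Henrici's constant vanishes for `m ≤ 1`, hence the added `1`.
  refine ⟨√(((m : ℝ) ^ 3 - m) / 12) + 1, by positivity, fun M ↦ ?_⟩
  have henrici := sq_frobNorm_sub_sum_sq_eigenvalues_le_general M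
  rw [Fintype.card_fin] at henrici
  simp only [frobNorm_eq_norm]
  exact henrici.trans (by gcongr; exact le_add_of_nonneg_right zero_le_one)
end

section
/- Let M be an m×m complex matrix such that for every nonzero t ∈ ℂ there exists an invertible m×m complex matrix f with f⁻¹·(t·M)·f = M. Then M is nilpotent, i.e. M^m = 0. -/
open Matrix

/-!
The coefficient of `X ^ (n - k)` in the characteristic polynomial is homogeneous of degree `k` in
the matrix entries, so similarity of `t • M` and `M` gives `b_k * t ^ k = b_k` for this coefficient
`b_k`. A single `t` with every `t ^ k - 1` (`1 ≤ k ≤ n`) regular therefore makes the characteristic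
polynomial equal to `X ^ n`, and Cayley–Hamilton concludes; over `ℂ` one may take `t = 2`.
-/

section ScaledCharpoly

open Polynomial

theorem monic_eq_X_pow_of_scaleRoots_eq {R : Type*} [Ring R] {p : R[X]} (hp : p.Monic) {t : R}
    (ht : ∀ k, 0 < k → k ≤ p.natDegree → IsRightRegular (t ^ k - 1)) (h : p.scaleRoots t = p) :
    p = X ^ p.natDegree := by
  ext i
  rw [coeff_X_pow]
  obtain hi | rfl | hi := lt_trichotomy i p.natDegree
  · have hfix : p.coeff i * t ^ (p.natDegree - i) = p.coeff i := by
      rw [← coeff_scaleRoots, h]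
    have hreg := ht (p.natDegree - i) (Nat.sub_pos_of_lt hi) (Nat.sub_le _ _)
    rw [if_neg hi.ne]
    exact hreg.mul_right_eq_zero_iff.mp (by rw [mul_sub, hfix, mul_one, sub_self])
  · rw [if_pos rfl, hp.coeff_natDegree]
  · rw [if_neg hi.ne', coeff_eq_zero_of_natDegree_lt hi]

variable {R n : Type*} [CommRing R] [Fintype n] [DecidableEq n]

theorem charpolyRev_smul (t : R) (M : Matrix n n R) :
    (t • M).charpolyRev = M.charpolyRev.comp (C t * X) := by
  rw [charpolyRev, charpolyRev, ← coe_compRingHom_apply, RingHom.map_det, map_sub, map_one]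
  congr 2
  ext1 i j
  change X * C (t * M i j) = (X * C (M i j)).comp (C t * X)
  rw [mul_comp, X_comp, C_comp, C_mul]
  ring

theorem coeff_charpoly_eq_coeff_charpolyRev (M : Matrix n n R) {i : ℕ} (hi : i ≤ Fintype.card n) :
    M.charpoly.coeff i = M.charpolyRev.coeff (Fintype.card n - i) := by
  nontriviality R
  rw [← reverse_charpoly, coeff_reverse, charpoly_natDegree_eq_dim, revAt_le (Nat.sub_le _ _),
    Nat.sub_sub_self hi]

theorem charpoly_smul (t : R) (M : Matrix n n R) :
    (t • M).charpoly = M.charpoly.scaleRoots t := by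
  nontriviality R
  ext i
  rw [coeff_scaleRoots, charpoly_natDegree_eq_dim]
  obtain hi | hi := le_or_gt i (Fintype.card n)
  · rw [coeff_charpoly_eq_coeff_charpolyRev _ hi, coeff_charpoly_eq_coeff_charpolyRev _ hi,
      charpolyRev_smul, comp_C_mul_X_coeff]
  · have hcoeff (A : Matrix n n R) : A.charpoly.coeff i = 0 :=
      coeff_eq_zero_of_natDegree_lt (A.charpoly_natDegree_eq_dim.trans_lt hi)
    rw [hcoeff, hcoeff, zero_mul]

theorem charpoly_eq_X_pow_of_charpoly_smul_eq {M : Matrix n n R} {t : R}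
    (ht : ∀ k, 0 < k → k ≤ Fintype.card n → IsRegular (t ^ k - 1))
    (h : (t • M).charpoly = M.charpoly) :
    M.charpoly = X ^ Fintype.card n := by
  nontriviality R
  have hdeg := M.charpoly_natDegree_eq_dim
  rw [← hdeg]
  exact monic_eq_X_pow_of_scaleRoots_eq M.charpoly_monic
    (fun k hk hkn ↦ (ht k hk (hkn.trans_eq hdeg)).right) ((charpoly_smul t M).symm.trans h)

theorem nilpotent_of_similar_to_all_scalings_general (M : Matrix n n R) (t : R)
    (ht : ∀ k, 0 < k → k ≤ Fintype.card n → IsRegular (t ^ k - 1))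
    (h : ∃ f : Matrix n n R, IsUnit f ∧ f⁻¹ * (t • M) * f = M) :
    M ^ Fintype.card n = 0 := by
  obtain ⟨_, ⟨f, rfl⟩, hf⟩ := h
  have hsimilar : (t • M).charpoly = M.charpoly := by
    rw [← charpoly_units_conj' f (t • M), hf]
  have hcayley := M.aeval_self_charpoly
  rwa [charpoly_eq_X_pow_of_charpoly_smul_eq ht hsimilar, map_pow, aeval_X] at hcayley

end ScaledCharpoly

/-- Let `M` be an `m × m` complex matrix such that for every nonzero `t ∈ ℂ`
there exists an invertible `m × m` complex matrix `f` with `f⁻¹ (t M) f = M`.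
Then `M` is nilpotent: `M ^ m = 0`. -/
theorem nilpotent_of_similar_to_all_scalings (m : ℕ) (M : Matrix (Fin m) (Fin m) ℂ)
    (h : ∀ t : ℂ, t ≠ 0 → ∃ f : Matrix (Fin m) (Fin m) ℂ,
      IsUnit f ∧ f⁻¹ * (t • M) * f = M) :
    M ^ m = 0 := by
  have htwo (k : ℕ) (hk : 0 < k) : IsRegular ((2 : ℂ) ^ k - 1) :=
    .of_ne_zero (sub_ne_zero.mpr (mod_cast (Nat.one_lt_two_pow hk.ne').ne'))
  simpa only [Fintype.card_fin] using
    nilpotent_of_similar_to_all_scalings_general M 2 (fun k hk _ ↦ htwo k hk) (h 2 two_ne_zero)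
end
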